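/- In the balls and bins problem with B bins and M = M(B) balls, let s ≥ 2 be a fixed integer. If M(B) = Θ(B^{1 − 1/s}) as B → ∞, then with high probability the maximum load is either s − 1 or s. Moreover, if M(B) = C·B^{1 − 1/s}·(1 + o(1)) for a constant C > 0, and X_B denotes the number of bins containing exactly s balls, then X_B converges in distribution, as B → ∞, to the Poisson distribution with parameter C^s/s!. -/

import Mathlib

open Filter Asymptotics

namespace BallsBins

attribute [local instance] Classical.propDecidable

/-- The load of bin `b` under the placement `f` of `M` balls into `B` bins. -/
def load {M B : ℕ} (f : Fin M → Fin B) (b : Fin B) : ℕ :=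
  (Finset.univ.filter fun i => f i = b).card

/-- The maximum load over all bins under the placement `f`. -/
def maxLoad {M B : ℕ} (f : Fin M → Fin B) : ℕ :=
  Finset.univ.sup (load f)

/-- The number of bins containing exactly `s` balls under the placement `f`. -/
def binsWithLoad {M B : ℕ} (f : Fin M → Fin B) (s : ℕ) : ℕ :=
  (Finset.univ.filter fun b => load f b = s).card

/-- The probability of the event `pred` when `M` balls are placed independently and
uniformly at random into `B` bins. -/
noncomputable def bbProb (B M : ℕ) (pred : (Fin M → Fin B) → Prop) : ℝ :=
  ((Finset.univ.filter fun f => pred f).card : ℝ) / (Fintype.card (Fin M → Fin B) : ℝ)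

open Finset in
lemma card_disjoint_families (M s k : ℕ) :
    #{T : Fin k → Finset (Fin M) | (∀ j, #(T j) = s) ∧ Pairwise fun i j => Disjoint (T i) (T j)} =
      ∏ j ∈ range k, (M - j * s).choose s := by
  induction k with
  | zero =>
    simp only [prod_range_zero, card_eq_one]
    refine ⟨default, ?_⟩
    ext T
    simp [Subsingleton.elim T default, Subsingleton.pairwise, eq_iff_true_of_subsingleton]
  | succ k ih =>
    rw [prod_range_succ, ← ih, ← smul_eq_mul, ← sum_const, card_eq_sum_card_fiberwise
      (t := {T : Fin k → Finset (Fin M) |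
        (∀ j, #(T j) = s) ∧ Pairwise fun i j => Disjoint (T i) (T j)}) (f := Fin.tail)]
    · refine sum_congr rfl fun T hT => ?_
      simp only [mem_filter, mem_univ, true_and] at hT
      have hU : #(univ \ univ.biUnion T) = M - k * s := by
        rw [card_sdiff_of_subset (subset_univ _), card_biUnion fun i _ j _ hij => hT.2 hij]
        simp [hT.1]
      rw [← hU, ← card_powersetCard]
      refine (card_nbij' (fun U => Fin.cons U T) (fun V => V 0) ?_ ?_ ?_ ?_).symm
      · intro U hU
        simp only [coe_filter, mem_filter, mem_univ, true_and, Set.mem_ofPred_eq,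
          Fin.tail_cons, and_true, mem_coe, mem_powersetCard] at hU ⊢
        have hd : ∀ j, Disjoint U (T j) := fun j => by
          refine disjoint_left.2 fun i hi hj => ?_
          have := hU.1 hi
          simp only [Finset.mem_sdiff, mem_univ, mem_biUnion, true_and, not_exists] at this
          exact this j hj
        refine ⟨fun j => ?_, fun i j hij => ?_⟩
        · cases j using Fin.cases with
          | zero => simpa using hU.2
          | succ j => simpa using hT.1 j
        · cases i using Fin.cases with
          | zero =>
            cases j using Fin.cases with
            | zero => exact absurd rfl hij
            | succ j => simpa using hd j
          | succ i =>
            cases j using Fin.cases with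
            | zero => simpa using (hd i).symm
            | succ j => simpa using hT.2 (fun h => hij (by rw [h]))
      · intro V hV
        simp only [coe_filter, mem_filter, mem_univ, true_and, Set.mem_ofPred_eq, mem_coe,
          mem_powersetCard] at hV ⊢
        refine ⟨fun i hi => ?_, hV.1.1 0⟩
        simp only [Finset.mem_sdiff, mem_univ, mem_biUnion, true_and, not_exists]
        intro j hj
        rw [← hV.2] at hj
        exact disjoint_left.1 (hV.1.2 (Fin.succ_ne_zero j).symm) hi hj
      · intro U _
        simp
      · intro V hV
        simp only [coe_filter, mem_filter, mem_univ, true_and, Set.mem_ofPred_eq] at hV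
        simp [← hV.2]
    · intro V hV
      simp only [coe_filter, mem_univ, true_and, Set.mem_ofPred_eq] at hV ⊢
      exact ⟨fun j => hV.1 j.succ, fun i j hij => hV.2 (by simpa using hij)⟩

open Finset in
lemma card_preimage_eq {M B k : ℕ} (e : Fin k ↪ Fin B) (s : ℕ) (T : Fin k → Finset (Fin M))
    (hc : ∀ j, #(T j) = s) (hd : Pairwise fun i j => Disjoint (T i) (T j)) :
    #{f : Fin M → Fin B | ∀ j, ({i | f i = e j} : Finset (Fin M)) = T j} =
      (B - k) ^ (M - k * s) := by
  have hU : #(univ \ univ.biUnion T) = M - k * s := by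
    rw [card_sdiff_of_subset (subset_univ _), card_biUnion fun i _ j _ hij => hd hij]
    simp [hc]
  have key : ({f : Fin M → Fin B | ∀ j, ({i | f i = e j} : Finset (Fin M)) = T j} : Finset _) =
      Fintype.piFinset fun i => if h : ∃ j, i ∈ T j then {e h.choose} else univ \ univ.map e := by
    ext f
    simp only [mem_filter, mem_univ, true_and, Fintype.mem_piFinset]
    constructor
    · intro h i
      split_ifs with hi
      · have := hi.choose_spec
        rw [← h] at this
        simpa using this
      · simp only [Finset.mem_sdiff, mem_univ, Finset.mem_map, true_and, not_exists]
        exact fun j hj => hi ⟨j, by rw [← h]; simp [hj]⟩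
    · intro h j
      ext i
      simp only [mem_filter, mem_univ, true_and]
      specialize h i
      split_ifs at h with hi
      · rw [mem_singleton] at h
        rw [h, e.injective.eq_iff]
        constructor
        · rintro rfl
          exact hi.choose_spec
        · intro hj
          by_contra hne
          exact disjoint_left.1 (hd hne) hi.choose_spec hj
      · simp only [Finset.mem_sdiff, mem_univ, Finset.mem_map, true_and, not_exists] at h
        exact ⟨fun hj => absurd hj.symm (h j), fun hj => absurd ⟨j, hj⟩ hi⟩
  rw [key, Fintype.card_piFinset, ← hU, ← prod_const]
  rw [← prod_subset (subset_univ (univ \ univ.biUnion T))]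
  · refine prod_congr rfl fun i hi => ?_
    simp only [Finset.mem_sdiff, mem_univ, mem_biUnion, true_and] at hi
    rw [dif_neg hi, card_sdiff_of_subset (subset_univ _)]
    simp
  · intro i _ hi
    simp only [Finset.mem_sdiff, mem_univ, mem_biUnion, true_and, not_not] at hi
    simp [hi]

open Finset in
lemma card_forall_load_eq {M B k : ℕ} (e : Fin k ↪ Fin B) (s : ℕ) :
    #{f : Fin M → Fin B | ∀ j, load f (e j) = s} =
      (∏ j ∈ range k, (M - j * s).choose s) * (B - k) ^ (M - k * s) := by
  rw [← card_disjoint_families, ← smul_eq_mul, ← sum_const, card_eq_sum_card_fiberwise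
    (t := {T : Fin k → Finset (Fin M) |
      (∀ j, #(T j) = s) ∧ Pairwise fun i j => Disjoint (T i) (T j)})
    (f := fun f j => ({i | f i = e j} : Finset (Fin M)))]
  · refine sum_congr rfl fun T hT => ?_
    simp only [mem_filter, mem_univ, true_and] at hT
    rw [← card_preimage_eq e s T hT.1 hT.2, filter_filter]
    congr 1
    ext f
    simp only [mem_filter, mem_univ, true_and, funext_iff]
    exact ⟨fun h => h.2, fun h => ⟨fun j => by rw [← hT.1 j, ← h j, load], h⟩⟩
  · intro f hf
    simp only [coe_filter, mem_univ, true_and, Set.mem_ofPred_eq] at hf ⊢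
    refine ⟨hf, fun i j hij => disjoint_left.2 fun x hx hy => ?_⟩
    simp only [mem_filter, mem_univ, true_and] at hx hy
    exact hij (e.injective (hx.symm.trans hy))

open Finset in
lemma sum_choose_binsWithLoad (M B s k : ℕ) :
    ∑ f : Fin M → Fin B, (binsWithLoad f s).choose k =
      B.choose k * (∏ j ∈ range k, (M - j * s).choose s) * (B - k) ^ (M - k * s) := by
  have h (f : Fin M → Fin B) : (binsWithLoad f s).choose k =
      ∑ S ∈ powersetCard k (univ : Finset (Fin B)), if ∀ b ∈ S, load f b = s then 1 else 0 := by
    rw [binsWithLoad, ← card_powersetCard, ← card_filter]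
    congr 1
    ext S
    simp only [mem_powersetCard, mem_filter, true_and, subset_iff, mem_univ]
    tauto
  simp_rw [h]
  rw [sum_comm, mul_assoc]
  have h2 : B.choose k = #(powersetCard k (univ : Finset (Fin B))) := by simp
  rw [h2, ← smul_eq_mul, ← sum_const]
  refine sum_congr rfl fun S hS => ?_
  have hS' := (mem_powersetCard.1 hS).2
  rw [← card_filter, ← card_forall_load_eq (S.orderEmbOfFin hS').toEmbedding]
  congr 1
  ext f
  simp only [mem_filter, mem_univ, true_and, RelEmbedding.coe_toEmbedding]
  constructor
  · exact fun h j => h _ (S.orderEmbOfFin_mem hS' j)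
  · intro h b hb
    have : b ∈ Set.range (S.orderEmbOfFin hS') := by rw [range_orderEmbOfFin]; exact hb
    obtain ⟨j, rfl⟩ := this
    exact h j

/-- The mean of a real function over all placements of `M` balls into `B` bins. -/
noncomputable def mean {B M : ℕ} (g : (Fin M → Fin B) → ℝ) : ℝ :=
  (∑ f, g f) / (B : ℝ) ^ M

lemma bbProb_eq_mean (B M : ℕ) (p : (Fin M → Fin B) → Prop) :
    bbProb B M p = mean fun f => if p f then 1 else 0 := by
  simp [bbProb, mean]

lemma mean_mono {B M : ℕ} {g h : (Fin M → Fin B) → ℝ} (hgh : ∀ f, g f ≤ h f) :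
    mean g ≤ mean h := by
  unfold mean
  gcongr
  exact hgh _

lemma mean_sum {B M : ℕ} {ι : Type*} (t : Finset ι) (g : ι → (Fin M → Fin B) → ℝ) :
    mean (fun f => ∑ i ∈ t, g i f) = ∑ i ∈ t, mean (g i) := by
  simp only [mean]
  rw [Finset.sum_comm, Finset.sum_div]

lemma mean_const_mul {B M : ℕ} (c : ℝ) (g : (Fin M → Fin B) → ℝ) :
    mean (fun f => c * g f) = c * mean g := by
  simp only [mean]
  rw [← Finset.mul_sum, mul_div_assoc]

lemma mean_add {B M : ℕ} (g h : (Fin M → Fin B) → ℝ) :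
    mean (fun f => g f + h f) = mean g + mean h := by
  simp only [mean]
  rw [Finset.sum_add_distrib, add_div]

lemma mean_const {B M : ℕ} (hB : 0 < B) (c : ℝ) :
    mean (fun _ : Fin M → Fin B => c) = c := by
  have : (B : ℝ) ≠ 0 := by positivity
  simp [mean]
  field_simp

/-- The `k`-th binomial moment of the number of bins with load `s`. -/
noncomputable def binomMoment (B M s k : ℕ) : ℝ :=
  mean fun f : Fin M → Fin B => ((binsWithLoad f s).choose k : ℝ)

lemma binomMoment_eq (B M s k : ℕ) :
    binomMoment B M s k = (B.choose k * (∏ j ∈ Finset.range k, ((M - j * s).choose s : ℝ)) *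
      ((B - k : ℕ) : ℝ) ^ (M - k * s)) / (B : ℝ) ^ M := by
  have := sum_choose_binsWithLoad M B s k
  rw [binomMoment, mean]
  congr 1
  exact_mod_cast this

/-- The leading-order value of the expected number of bins with load `s`. -/
noncomputable def intensity (B M s : ℕ) : ℝ := B * (M.choose s / (B : ℝ) ^ s)

lemma binomMoment_le {B : ℕ} (hB : 0 < B) (M s k : ℕ) :
    binomMoment B M s k ≤ intensity B M s ^ k / k.factorial := by
  have hB' : (0 : ℝ) < B := by positivity
  rw [binomMoment_eq]
  by_cases hM : k * s ≤ M
  · have h1 : (B.choose k : ℝ) ≤ (B : ℝ) ^ k / k.factorial := Nat.choose_le_pow_div k B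
    have h2 : ∏ j ∈ Finset.range k, ((M - j * s).choose s : ℝ) ≤ (M.choose s : ℝ) ^ k := by
      calc _ ≤ ∏ j ∈ Finset.range k, (M.choose s : ℝ) := by
            refine Finset.prod_le_prod (fun _ _ => by positivity) fun j _ => ?_
            exact_mod_cast Nat.choose_le_choose s (Nat.sub_le _ _)
        _ = _ := by simp
    have h3 : ((B - k : ℕ) : ℝ) ^ (M - k * s) ≤ (B : ℝ) ^ (M - k * s) := by
      gcongr
      exact Nat.sub_le _ _
    calc _ ≤ ((B : ℝ) ^ k / k.factorial * (M.choose s : ℝ) ^ k * (B : ℝ) ^ (M - k * s)) /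
          (B : ℝ) ^ M := by gcongr
      _ = _ := by
        have : (B : ℝ) ^ M = (B : ℝ) ^ (M - k * s) * ((B : ℝ) ^ s) ^ k := by
          rw [← pow_mul, ← pow_add, mul_comm s k, Nat.sub_add_cancel hM]
        rw [this, intensity, mul_pow, div_pow]
        field_simp
  · have hk : k ≠ 0 := by rintro rfl; simp at hM
    obtain ⟨l, rfl⟩ := Nat.exists_eq_succ_of_ne_zero hk
    have h0 : ((M - l * s).choose s : ℝ) = 0 := by
      rw [Nat.choose_eq_zero_of_lt]
      · simp
      · have hs : s ≠ 0 := by rintro rfl; simp at hM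
        rw [Nat.succ_mul] at hM
        omega
    rw [Finset.prod_eq_zero (Finset.self_mem_range_succ l) h0]
    simp only [mul_zero, zero_mul, zero_div]
    unfold intensity
    positivity

lemma binomMoment_nonneg (B M s k : ℕ) : 0 ≤ binomMoment B M s k := by
  rw [binomMoment_eq]
  positivity

lemma binsWithLoad_le {B M : ℕ} (f : Fin M → Fin B) (s : ℕ) : binsWithLoad f s ≤ B := by
  simpa [binsWithLoad] using Finset.card_filter_le Finset.univ fun b => load f b = s

open Finset in
lemma ite_eq_sum_choose {N X : ℕ} (hX : X ≤ N) (j : ℕ) :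
    (if X = j then 1 else 0 : ℝ) =
      ∑ i ∈ range (N + 1), ((-1) ^ i * ((j + i).choose j : ℝ)) * (X.choose (j + i) : ℝ) := by
  have h (i : ℕ) : ((-1) ^ i * ((j + i).choose j : ℝ)) * (X.choose (j + i) : ℝ) =
      (X.choose j : ℝ) * ((-1) ^ i * ((X - j).choose i : ℝ)) := by
    have := Nat.choose_mul (n := X) (Nat.le_add_right j i)
    rw [Nat.add_sub_cancel_left] at this
    have h' : (X.choose (j + i) : ℝ) * ((j + i).choose j : ℝ) =
        (X.choose j : ℝ) * ((X - j).choose i : ℝ) := by exact_mod_cast this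
    linear_combination (-1) ^ i * h'
  have h2 : ∑ i ∈ range (N + 1), (-1 : ℝ) ^ i * ((X - j).choose i : ℝ) =
      if X - j = 0 then 1 else 0 := by
    rw [← sum_subset (s₁ := range (X - j + 1)) (range_subset_range.2 (by omega))]
    · exact_mod_cast Int.alternating_sum_range_choose (n := X - j)
    · intro i _ hi
      rw [Nat.choose_eq_zero_of_lt (by simpa using hi)]
      simp
  simp_rw [h]
  rw [← mul_sum, h2]
  rcases lt_trichotomy X j with hj | rfl | hj
  · simp [hj.ne, Nat.choose_eq_zero_of_lt hj]
  · simp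
  · simp [hj.ne', Nat.sub_ne_zero_of_lt hj]

lemma bbProb_binsWithLoad_eq (B M s j : ℕ) :
    bbProb B M (fun f => binsWithLoad f s = j) =
      ∑' i, ((-1) ^ i * ((j + i).choose j : ℝ)) * binomMoment B M s (j + i) := by
  rw [tsum_eq_sum (s := Finset.range (B + 1)), bbProb_eq_mean]
  · simp_rw [binomMoment, ← mean_const_mul, ← mean_sum]
    congr 1
    ext f
    rw [← ite_eq_sum_choose (binsWithLoad_le f s) j]
    congr
  · intro i hi
    rw [binomMoment_eq, Nat.choose_eq_zero_of_lt (n := B) (by simp at hi; omega)]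
    simp

lemma tendsto_choose_sub_div_choose (c r : ℕ) :
    Tendsto (fun n : ℕ => ((n - c).choose r : ℝ) / (n.choose r : ℝ)) atTop (nhds 1) := by
  have hsub : (fun n : ℕ => ((n - c : ℕ) : ℝ)) ~[atTop] fun n : ℕ => (n : ℝ) := by
    refine (isEquivalent_iff_tendsto_one ?_).2 ?_
    · filter_upwards [eventually_ne_atTop 0] with n hn
      exact_mod_cast hn
    · rw [← tendsto_add_atTop_iff_nat c]
      simpa using tendsto_natCast_div_add_atTop (c : ℝ)
  have h1 : (fun n : ℕ => ((n - c).choose r : ℝ)) ~[atTop] fun n : ℕ => (n.choose r : ℝ) :=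
    (((isEquivalent_choose r).comp_tendsto (tendsto_sub_atTop_nat c)).trans
      ((hsub.pow r).div IsEquivalent.refl)).trans (isEquivalent_choose r).symm
  refine (isEquivalent_iff_tendsto_one ?_).1 h1
  filter_upwards [eventually_ge_atTop r] with n hn
  exact_mod_cast (Nat.choose_pos hn).ne'

lemma tendsto_sub_div_pow {M : ℕ → ℕ}
    (hMB : Tendsto (fun B : ℕ => (M B : ℝ) / B) atTop (nhds 0)) (k c : ℕ) :
    Tendsto (fun B : ℕ => (((B - k : ℕ) : ℝ) / B) ^ (M B - c)) atTop (nhds 1) := by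
  have hl : Tendsto (fun B : ℕ => 1 - (k : ℝ) * ((M B : ℝ) / B)) atTop (nhds 1) := by
    simpa using (hMB.const_mul (k : ℝ)).const_sub 1
  refine tendsto_of_tendsto_of_tendsto_of_le_of_le' hl tendsto_const_nhds ?_ ?_
  · filter_upwards [eventually_ge_atTop k, eventually_gt_atTop 0] with B hk hB
    have hB' : (0 : ℝ) < B := by exact_mod_cast hB
    have hk' : (k : ℝ) ≤ B := by exact_mod_cast hk
    have hkB : (k : ℝ) / B ≤ 1 := (div_le_one hB').2 hk'
    have h := one_add_mul_le_pow (a := -((k : ℝ) / B)) (by linarith) (M B - c)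
    have e : ((B - k : ℕ) : ℝ) / B = 1 + -((k : ℝ) / B) := by
      rw [Nat.cast_sub hk]
      field_simp
      ring
    rw [e]
    refine le_trans ?_ h
    have h3 : ((M B - c : ℕ) : ℝ) ≤ M B := by exact_mod_cast Nat.sub_le _ _
    have h4 : 0 ≤ (k : ℝ) / B := by positivity
    have h5 : (k : ℝ) * ((M B : ℝ) / B) = M B * (k / B) := by ring
    rw [h5]
    nlinarith [mul_le_mul_of_nonneg_right h3 h4]
  · filter_upwards with B
    refine pow_le_one₀ (by positivity) (div_le_one_of_le₀ ?_ (by positivity))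
    exact_mod_cast Nat.sub_le _ _

lemma intensity_pos {B M s : ℕ} (hB : 0 < B) (hM : s ≤ M) : 0 < intensity B M s := by
  have := Nat.choose_pos hM
  unfold intensity
  positivity

lemma tendsto_binomMoment_div {M : ℕ → ℕ} (hM : Tendsto M atTop atTop)
    (hMB : Tendsto (fun B : ℕ => (M B : ℝ) / B) atTop (nhds 0)) (s k : ℕ) :
    Tendsto (fun B : ℕ => binomMoment B (M B) s k / intensity B (M B) s ^ k) atTop
      (nhds (1 / k.factorial)) := by
  have h1 : Tendsto (fun B : ℕ => (B.choose k : ℝ) / (B : ℝ) ^ k) atTop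
      (nhds (1 / k.factorial)) := by
    have := (isEquivalent_iff_tendsto_one (u := fun n : ℕ => (n.choose k : ℝ)) ?_).1
      (isEquivalent_choose k)
    · have h := this.mul_const (1 / (k.factorial : ℝ))
      rw [one_mul] at h
      refine h.congr fun B => ?_
      have : (k.factorial : ℝ) ≠ 0 := by positivity
      simp only [Pi.div_apply]
      field_simp
    · filter_upwards [eventually_gt_atTop 0] with B hB
      positivity
  have h2 : Tendsto (fun B : ℕ => ∏ j ∈ Finset.range k,
      ((M B - j * s).choose s : ℝ) / ((M B).choose s : ℝ)) atTop (nhds 1) := by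
    have := tendsto_finsetProd (Finset.range k) fun j _ =>
      (tendsto_choose_sub_div_choose (j * s) s).comp hM
    simpa using this
  have h := (h1.mul h2).mul (tendsto_sub_div_pow hMB k (k * s))
  rw [mul_one, mul_one] at h
  refine h.congr' ?_
  filter_upwards [eventually_gt_atTop 0, hM.eventually_ge_atTop s,
    hM.eventually_ge_atTop (k * s)] with B hB hs hk
  have hB' : (0 : ℝ) < B := by exact_mod_cast hB
  have hc : (0 : ℝ) < (M B).choose s := by exact_mod_cast Nat.choose_pos hs
  have hBM : (B : ℝ) ^ M B = (B : ℝ) ^ (M B - k * s) * ((B : ℝ) ^ s) ^ k := by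
    rw [← pow_mul, ← pow_add, mul_comm s k, Nat.sub_add_cancel hk]
  rw [binomMoment_eq, hBM, intensity, Finset.prod_div_distrib, Finset.prod_const,
    Finset.card_range, mul_pow, div_pow, div_pow]
  field_simp

/-- If the expected number of bins with load `s` tends to `l`, and the number of balls tends to
infinity but is negligible against the number of bins, then the number of bins with load `s` is
asymptotically Poisson with parameter `l`. -/
lemma tendsto_bbProb_binsWithLoad {M : ℕ → ℕ} (hM : Tendsto M atTop atTop)
    (hMB : Tendsto (fun B : ℕ => (M B : ℝ) / B) atTop (nhds 0)) {s : ℕ} {l : ℝ}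
    (hl : Tendsto (fun B : ℕ => intensity B (M B) s) atTop (nhds l)) (j : ℕ) :
    Tendsto (fun B : ℕ => bbProb B (M B) fun f => binsWithLoad f s = j) atTop
      (nhds (Real.exp (-l) * l ^ j / j.factorial)) := by
  have hmom (k : ℕ) : Tendsto (fun B : ℕ => binomMoment B (M B) s k) atTop
      (nhds (l ^ k / k.factorial)) := by
    have h := (tendsto_binomMoment_div hM hMB s k).mul (hl.pow k)
    rw [one_div_mul_eq_div] at h
    refine h.congr' ?_
    filter_upwards [eventually_gt_atTop 0, hM.eventually_ge_atTop s] with B hB hs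
    exact div_mul_cancel₀ _ (pow_pos (intensity_pos hB hs) k).ne'
  have hcoef (x : ℝ) (i : ℕ) : ((j + i).choose j : ℝ) * (x ^ (j + i) / (j + i).factorial) =
      x ^ j / j.factorial * (x ^ i / i.factorial) := by
    have h1 : (j.factorial : ℝ) ≠ 0 := by positivity
    have h2 : (i.factorial : ℝ) ≠ 0 := by positivity
    have h3 : ((j + i).factorial : ℝ) ≠ 0 := by positivity
    rw [Nat.cast_add_choose, pow_add]
    field_simp
  have hlim : Real.exp (-l) * l ^ j / j.factorial =
      ∑' i, ((-1) ^ i * ((j + i).choose j : ℝ)) * (l ^ (j + i) / (j + i).factorial) := by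
    simp_rw [mul_assoc, hcoef l]
    rw [Real.exp_eq_exp_ℝ, NormedSpace.exp_eq_tsum_div, mul_div_assoc, mul_comm, ← tsum_mul_left]
    refine tsum_congr fun i => ?_
    rw [neg_pow l]
    ring
  simp_rw [bbProb_binsWithLoad_eq]
  rw [hlim]
  refine tendsto_tsum_of_dominated_convergence
    (bound := fun i => (|l| + 1) ^ j / j.factorial * ((|l| + 1) ^ i / i.factorial))
    ((Real.summable_pow_div_factorial _).mul_left _) (fun i => (hmom (j + i)).const_mul _) ?_
  filter_upwards [eventually_gt_atTop 0, hl.eventually_le_const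
    (lt_of_le_of_lt (le_abs_self l) (lt_add_one _))] with B hB hlB i
  have h0 : 0 ≤ intensity B (M B) s := by
    unfold intensity
    positivity
  rw [← hcoef, norm_mul, norm_mul, norm_pow, norm_neg, norm_one, one_pow, one_mul,
    Real.norm_of_nonneg (Nat.cast_nonneg _), Real.norm_of_nonneg (binomMoment_nonneg _ _ _ _)]
  gcongr
  refine (binomMoment_le hB _ _ _).trans ?_
  gcongr

/-- If the expected number of bins with load `s` tends to infinity, then some bin has load `s`
with high probability. -/
lemma tendsto_bbProb_binsWithLoad_eq_zero {M : ℕ → ℕ} (hM : Tendsto M atTop atTop)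
    (hMB : Tendsto (fun B : ℕ => (M B : ℝ) / B) atTop (nhds 0)) {s : ℕ}
    (hl : Tendsto (fun B : ℕ => intensity B (M B) s) atTop atTop) :
    Tendsto (fun B : ℕ => bbProb B (M B) fun f => binsWithLoad f s = 0) atTop (nhds 0) := by
  set a : ℕ → ℝ := fun B => intensity B (M B) s
  have h1 : Tendsto (fun B : ℕ => binomMoment B (M B) s 1 / a B) atTop (nhds 1) := by
    simpa using tendsto_binomMoment_div hM hMB s 1
  have h2 : Tendsto (fun B : ℕ => binomMoment B (M B) s 2 / a B ^ 2) atTop (nhds (1 / 2)) := by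
    simpa using tendsto_binomMoment_div hM hMB s 2
  have hinv : Tendsto (fun B : ℕ => (a B)⁻¹) atTop (nhds 0) := tendsto_inv_atTop_zero.comp hl
  have hlim : Tendsto (fun B : ℕ => 2 * (binomMoment B (M B) s 2 / a B ^ 2) +
      (binomMoment B (M B) s 1 / a B) * (a B)⁻¹ - 2 * (binomMoment B (M B) s 1 / a B) + 1)
      atTop (nhds 0) := by
    have := (((h2.const_mul 2).add (h1.mul hinv)).sub (h1.const_mul 2)).add_const 1
    norm_num at this
    exact this
  refine tendsto_of_tendsto_of_tendsto_of_le_of_le' tendsto_const_nhds hlim ?_ ?_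
  · exact Eventually.of_forall fun B => div_nonneg (by positivity) (by positivity)
  · filter_upwards [eventually_gt_atTop 0, hl.eventually_gt_atTop 0] with B hB ha
    have ha' : 0 < a B := ha
    rw [bbProb_eq_mean]
    calc _ ≤ mean fun f : Fin (M B) → Fin B => 2 / a B ^ 2 * ((binsWithLoad f s).choose 2 : ℝ) +
            (1 / a B ^ 2 - 2 / a B) * ((binsWithLoad f s).choose 1 : ℝ) + 1 := by
          refine mean_mono fun f => ?_
          have hsq : 2 / a B ^ 2 * ((binsWithLoad f s).choose 2 : ℝ) +
              (1 / a B ^ 2 - 2 / a B) * ((binsWithLoad f s).choose 1 : ℝ) + 1 =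
              ((binsWithLoad f s : ℝ) / a B - 1) ^ 2 := by
            rw [Nat.cast_choose_two, Nat.choose_one_right]
            field_simp
            ring
          rw [hsq]
          split_ifs with h
          · simp [h]
          · positivity
      _ = 2 / a B ^ 2 * binomMoment B (M B) s 2 +
            (1 / a B ^ 2 - 2 / a B) * binomMoment B (M B) s 1 + 1 := by
          rw [mean_add, mean_add, mean_const_mul, mean_const_mul, mean_const hB]
          rfl
      _ = _ := by
          field_simp
          ring

open Finset in
lemma bbProb_le_maxLoad_le {B : ℕ} (hB : 0 < B) (M : ℕ) {s : ℕ} (hs : 0 < s) :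
    bbProb B M (fun f => s ≤ maxLoad f) ≤ intensity B M s := by
  have hB' : (B : ℝ) ≠ 0 := by positivity
  rw [bbProb_eq_mean]
  calc _ ≤ mean fun f : Fin M → Fin B => ∑ b : Fin B, ∑ T ∈ powersetCard s univ,
          if ∀ i ∈ T, f i = b then (1 : ℝ) else 0 := by
        refine mean_mono fun f => ?_
        split_ifs with h
        · obtain ⟨b, -, hb⟩ := (Finset.le_sup_iff hs).1 h
          obtain ⟨T, hT, hTs⟩ := exists_subset_card_eq hb
          have hT' : ∀ i ∈ T, f i = b := fun i hi => by simpa using hT hi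
          calc (1 : ℝ) = if ∀ i ∈ T, f i = b then (1 : ℝ) else 0 := by rw [if_pos hT']
            _ ≤ ∑ T ∈ powersetCard s univ, if ∀ i ∈ T, f i = b then (1 : ℝ) else 0 :=
              single_le_sum (f := fun T => if ∀ i ∈ T, f i = b then (1 : ℝ) else 0)
                (fun T _ => by positivity) (mem_powersetCard.2 ⟨subset_univ T, hTs⟩)
            _ ≤ _ := single_le_sum (f := fun b => ∑ T ∈ powersetCard s univ,
                if ∀ i ∈ T, f i = b then (1 : ℝ) else 0)
                (fun b _ => sum_nonneg fun T _ => by positivity) (mem_univ b)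
        · exact sum_nonneg fun b _ => sum_nonneg fun T _ => by positivity
    _ = ∑ b : Fin B, ∑ T ∈ powersetCard s (univ : Finset (Fin M)), 1 / (B : ℝ) ^ s := by
        simp_rw [mean_sum]
        refine sum_congr rfl fun b _ => sum_congr rfl fun T hT => ?_
        have hTs := (mem_powersetCard.1 hT).2
        have hTM : s ≤ M := by simpa [hTs] using card_le_univ T
        have hset : ({f : Fin M → Fin B | ∀ i ∈ T, f i = b} : Finset _) =
            Fintype.piFinset fun i => if i ∈ T then {b} else univ := by
          ext f
          simp only [mem_filter, mem_univ, true_and, Fintype.mem_piFinset]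
          refine forall_congr' fun i => ?_
          split_ifs with hi <;> simp [hi]
        have hcard : #{f : Fin M → Fin B | ∀ i ∈ T, f i = b} = B ^ (M - s) := by
          rw [hset, Fintype.card_piFinset, ← prod_subset (subset_univ (univ \ T))]
          · rw [prod_congr rfl (g := fun _ => B), prod_const,
              card_sdiff_of_subset (subset_univ _)]
            · simp [hTs]
            · intro i hi
              simp [(Finset.mem_sdiff.1 hi).2]
          · intro i _ hi
            simp only [Finset.mem_sdiff, mem_univ, true_and, not_not] at hi
            simp [hi]
        rw [mean, sum_boole, hcard, Nat.cast_pow, div_eq_div_iff (by positivity) (by positivity),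
          ← pow_add, Nat.sub_add_cancel hTM, one_mul]
    _ = _ := by
        simp only [sum_const, card_univ, Fintype.card_fin, card_powersetCard, nsmul_eq_mul, intensity]
        ring

lemma tendsto_intensity_div {M : ℕ → ℕ} (hM : Tendsto M atTop atTop) (s : ℕ) :
    Tendsto (fun B : ℕ => intensity B (M B) s / (B * ((M B : ℝ) / B) ^ s)) atTop
      (nhds (1 / s.factorial)) := by
  have h := (isEquivalent_iff_tendsto_one (u := fun n : ℕ => (n.choose s : ℝ)) ?_).1
    (isEquivalent_choose s)
  · have h' := (h.comp hM).mul_const (1 / (s.factorial : ℝ))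
    rw [one_mul] at h'
    refine h'.congr' ?_
    filter_upwards [eventually_gt_atTop 0, hM.eventually_gt_atTop 0] with B hB hMB
    have h1 : (0 : ℝ) < B := by exact_mod_cast hB
    have h2 : (0 : ℝ) < M B := by exact_mod_cast hMB
    have h3 : (0 : ℝ) < s.factorial := by positivity
    simp only [Function.comp_apply, Pi.div_apply, intensity, div_pow]
    field_simp
  · filter_upwards [eventually_gt_atTop 0] with n hn
    positivity

lemma bbProb_le_one (B M : ℕ) (p : (Fin M → Fin B) → Prop) : bbProb B M p ≤ 1 := by
  refine div_le_one_of_le₀ ?_ (by positivity)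
  exact_mod_cast Finset.card_filter_le _ _

lemma one_le_bbProb_maxLoad_add {B : ℕ} (hB : 0 < B) (M : ℕ) {s : ℕ} (hs : 0 < s) :
    1 ≤ bbProb B M (fun f => maxLoad f = s - 1 ∨ maxLoad f = s) +
      bbProb B M (fun f => binsWithLoad f (s - 1) = 0) +
      bbProb B M (fun f => s + 1 ≤ maxLoad f) := by
  simp_rw [bbProb_eq_mean]
  rw [← mean_add, ← mean_add]
  conv_lhs => rw [← mean_const (M := M) hB 1]
  refine mean_mono fun f => ?_
  have h : (maxLoad f = s - 1 ∨ maxLoad f = s) ∨ binsWithLoad f (s - 1) = 0 ∨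
      s + 1 ≤ maxLoad f := by
    by_cases h0 : binsWithLoad f (s - 1) = 0
    · exact Or.inr (Or.inl h0)
    · obtain ⟨b, hb⟩ := Finset.card_pos.1 (Nat.pos_of_ne_zero h0)
      have hb' : load f b = s - 1 := by simpa using hb
      have : load f b ≤ maxLoad f := Finset.le_sup (Finset.mem_univ b)
      omega
  split_ifs <;> first | (norm_num; done) | (exfalso; tauto)

lemma rpow_one_sub_eq {B : ℕ} (hB : 0 < B) (s : ℕ) :
    (B : ℝ) ^ ((1 : ℝ) - 1 / (s : ℝ)) = B * (B : ℝ) ^ (-(1 / (s : ℝ))) := by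
  rw [sub_eq_add_neg, Real.rpow_add (by positivity), Real.rpow_one]

lemma natCast_mul_rpow_pow {B s : ℕ} (hB : 0 < B) (hs : s ≠ 0) :
    (B : ℝ) * ((B : ℝ) ^ (-(1 / (s : ℝ)))) ^ s = 1 := by
  have hB' : (B : ℝ) ≠ 0 := by positivity
  have hs' : (s : ℝ) ≠ 0 := by exact_mod_cast hs
  rw [← Real.rpow_natCast, ← Real.rpow_mul (by positivity), neg_mul, one_div_mul_cancel hs',
    Real.rpow_neg_one, mul_inv_cancel₀ hB']

/-- **Theorem 3(c).** In the balls and bins problem with `B` bins and `M(B)` balls, if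
`M(B) = Θ(B^(1 - 1/s))` for a fixed integer `s ≥ 2`, then w.h.p. the maximum load is
`s - 1` or `s`. Moreover, if `M(B) = C·B^(1 - 1/s)·(1 + o(1))` with `C > 0`, then the
number `X_B` of bins containing exactly `s` balls converges in distribution to the
Poisson distribution with parameter `C^s/s!`. -/
theorem maxLoad_critical (s : ℕ) (hs : 2 ≤ s) (M : ℕ → ℕ)
    (hM : (fun B : ℕ => (M B : ℝ)) =Θ[atTop]
      fun B : ℕ => (B : ℝ) ^ ((1 : ℝ) - 1 / (s : ℝ))) :
    Tendsto (fun B : ℕ => bbProb B (M B) fun f => maxLoad f = s - 1 ∨ maxLoad f = s)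
        atTop (nhds 1) ∧
      ∀ C : ℝ, 0 < C →
        ((fun B : ℕ => (M B : ℝ)) ~[atTop]
          fun B : ℕ => C * (B : ℝ) ^ ((1 : ℝ) - 1 / (s : ℝ))) →
        ∀ j : ℕ,
          Tendsto (fun B : ℕ => bbProb B (M B) fun f => binsWithLoad f s = j) atTop
            (nhds (Real.exp (-(C ^ s / (s.factorial : ℝ))) *
              (C ^ s / (s.factorial : ℝ)) ^ j / (j.factorial : ℝ))) := by
  have hs0 : s ≠ 0 := by omega
  have hs1 : (2 : ℝ) ≤ s := by exact_mod_cast hs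
  set t : ℕ → ℝ := fun B => (B : ℝ) ^ (-(1 / (s : ℝ))) with ht
  have htpos {B : ℕ} (hB : 0 < B) : 0 < t B := Real.rpow_pos_of_pos (by positivity) _
  have ht0 : Tendsto t atTop (nhds 0) :=
    (tendsto_rpow_neg_atTop (by positivity)).comp tendsto_natCast_atTop_atTop
  have hts {B : ℕ} (hB : 0 < B) : (B : ℝ) * t B ^ s = 1 := natCast_mul_rpow_pow hB hs0
  have hnorm {B : ℕ} (hB : 0 < B) : ‖(B : ℝ) ^ ((1 : ℝ) - 1 / (s : ℝ))‖ = B * t B := by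
    rw [Real.norm_of_nonneg (by positivity), rpow_one_sub_eq hB]
  obtain ⟨c₂, hc₂, hup⟩ := hM.1.exists_pos
  obtain ⟨c₁, hc₁, hlow⟩ := hM.2.exists_pos
  have hq_le : ∀ᶠ B : ℕ in atTop, (M B : ℝ) / B ≤ c₂ * t B := by
    filter_upwards [hup.bound, eventually_gt_atTop 0] with B h hB
    rw [hnorm hB, Real.norm_of_nonneg (by positivity)] at h
    rw [div_le_iff₀ (by positivity)]
    linarith
  have hq_ge : ∀ᶠ B : ℕ in atTop, c₁⁻¹ * t B ≤ (M B : ℝ) / B := by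
    filter_upwards [hlow.bound, eventually_gt_atTop 0] with B h hB
    rw [hnorm hB, Real.norm_of_nonneg (by positivity)] at h
    rw [le_div_iff₀ (by positivity), inv_mul_eq_div, div_mul_eq_mul_div, div_le_iff₀ hc₁]
    linarith
  have hMB : Tendsto (fun B : ℕ => (M B : ℝ) / B) atTop (nhds 0) := by
    refine tendsto_of_tendsto_of_tendsto_of_le_of_le' tendsto_const_nhds
      (by simpa using ht0.const_mul c₂) (Eventually.of_forall fun B => by positivity) hq_le
  have hMtop : Tendsto M atTop atTop := by
    refine (tendsto_natCast_atTop_iff (R := ℝ)).1 ?_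
    have hp : (0 : ℝ) < 1 - 1 / s := by
      rw [sub_pos, div_lt_one (by positivity)]
      linarith
    refine tendsto_atTop_mono' _ ?_ (((tendsto_rpow_atTop hp).comp
      tendsto_natCast_atTop_atTop).const_mul_atTop (inv_pos.2 hc₁))
    filter_upwards [hq_ge, eventually_gt_atTop 0] with B h hB
    rw [le_div_iff₀ (by positivity)] at h
    simp only [Function.comp_apply]
    rw [rpow_one_sub_eq hB]
    linarith
  have hint {r : ℕ} : ∀ᶠ B : ℕ in atTop, intensity B (M B) r / (B * ((M B : ℝ) / B) ^ r) *
      (B * ((M B : ℝ) / B) ^ r) = intensity B (M B) r := by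
    filter_upwards [eventually_gt_atTop 0, hMtop.eventually_gt_atTop 0] with B hB hM0
    exact div_mul_cancel₀ _ (by positivity)
  refine ⟨?_, fun C hC hMC j => ?_⟩
  · have hsub : Tendsto (fun B : ℕ => (B : ℝ) * ((M B : ℝ) / B) ^ (s - 1)) atTop atTop := by
      have htinv : Tendsto (fun B => (t B)⁻¹) atTop atTop := by
        refine Tendsto.inv_tendsto_nhdsGT_zero (tendsto_nhdsWithin_iff.2 ⟨ht0, ?_⟩)
        filter_upwards [eventually_gt_atTop 0] with B hB using htpos hB
      refine tendsto_atTop_mono' _ ?_ (htinv.const_mul_atTop (pow_pos (inv_pos.2 hc₁) (s - 1)))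
      filter_upwards [hq_ge, eventually_gt_atTop 0] with B h hB
      have htB := htpos hB
      have e : (t B)⁻¹ = B * t B ^ (s - 1) := by
        rw [inv_eq_one_div, div_eq_iff htB.ne', mul_assoc, ← pow_succ, Nat.sub_add_cancel (by omega),
          hts hB]
      calc c₁⁻¹ ^ (s - 1) * (t B)⁻¹ = B * (c₁⁻¹ * t B) ^ (s - 1) := by rw [e]; ring
        _ ≤ _ := by gcongr
    have hsup : Tendsto (fun B : ℕ => (B : ℝ) * ((M B : ℝ) / B) ^ (s + 1)) atTop (nhds 0) := by
      refine tendsto_of_tendsto_of_tendsto_of_le_of_le' tendsto_const_nhds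
        (by simpa using ht0.const_mul (c₂ ^ (s + 1)))
        (Eventually.of_forall fun B => by positivity) ?_
      filter_upwards [hq_le, eventually_gt_atTop 0] with B h hB
      calc _ ≤ (B : ℝ) * (c₂ * t B) ^ (s + 1) := by gcongr
        _ = c₂ ^ (s + 1) * (B * t B ^ s) * t B := by ring
        _ = c₂ ^ (s + 1) * t B := by rw [hts hB, mul_one]
    have hempty := tendsto_bbProb_binsWithLoad_eq_zero hMtop hMB (s := s - 1)
      (((tendsto_intensity_div hMtop (s - 1)).pos_mul_atTop (by positivity) hsub).congr' hint)
    have hover : Tendsto (fun B : ℕ => intensity B (M B) (s + 1)) atTop (nhds 0) := by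
      have h := (tendsto_intensity_div hMtop (s + 1)).mul hsup
      rw [mul_zero] at h
      exact h.congr' hint
    have hlow : Tendsto (fun B : ℕ => 1 - bbProb B (M B) (fun f => binsWithLoad f (s - 1) = 0) -
        intensity B (M B) (s + 1)) atTop (nhds 1) := by
      simpa using (hempty.const_sub 1).sub hover
    refine tendsto_of_tendsto_of_tendsto_of_le_of_le' hlow tendsto_const_nhds ?_
      (Eventually.of_forall fun B => bbProb_le_one _ _ _)
    filter_upwards [eventually_gt_atTop 0] with B hB
    have h1 := one_le_bbProb_maxLoad_add hB (M B) (s := s) (by omega)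
    have h2 := bbProb_le_maxLoad_le hB (M B) (s := s + 1) (by omega)
    linarith
  · refine tendsto_bbProb_binsWithLoad hMtop hMB ?_ j
    have hratio : Tendsto (fun B : ℕ => (B : ℝ) * ((M B : ℝ) / B) ^ s) atTop (nhds (C ^ s)) := by
      have h := (isEquivalent_iff_tendsto_one ?_).1 hMC
      · have h' := (h.const_mul C).pow s
        rw [mul_one] at h'
        refine h'.congr' ?_
        filter_upwards [eventually_gt_atTop 0] with B hB
        have htB := htpos hB
        have hB' : (B : ℝ) = 1 / t B ^ s := by
          rw [eq_div_iff (by positivity), hts hB]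
        simp only [Pi.div_apply]
        rw [rpow_one_sub_eq hB]
        change (C * ((M B : ℝ) / (C * (B * t B)))) ^ s = _
        have e : C * ((M B : ℝ) / (C * (B * t B))) = (M B : ℝ) / B / t B := by field_simp
        rw [e, div_pow _ (t B), div_eq_mul_one_div, ← hB', mul_comm]
      · filter_upwards [eventually_gt_atTop 0] with B hB
        positivity
    have h := (tendsto_intensity_div hMtop s).mul hratio
    rw [one_div_mul_eq_div] at h
    exact h.congr' hint

end BallsBins
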